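/- arXiv:2212.08786 — 2 statements merged into one kernel-verified Lean document; each statement's English description precedes it below -/
import Mathlib

section
/- Let (X, d) be a proper, unbounded geodesic metric space, let p ∈ X and let S > 0. Suppose there exist a sequence of positive reals d_k → ∞ and points m_k ∈ X with d(p, m_k) = d_k/2 such that for every k and every x ∈ X with d(p, x) = (1/2 + S)·d_k one has d(x, m_k) ≥ 3·S·d_k. Then limsup_{r → ∞} diam(∂B_r(p))/r ≥ 4·S, where ∂B_r(p) = {x ∈ X : d(x, p) = r} and diam denotes the diameter (supremum of pairwise distances). -/
open Set Filter

/-!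
A minimizing segment from `p` that reaches radius `(1/2 + S) d` crosses the sphere of radius `d/2`
at a point `x` lying `S d` before its end, while that end is at distance at least `3 S d` from `m`.
Hence `x` and `m` are points of the sphere of radius `d/2` at distance at least
`2 S d = 4 S (d/2)`.
-/

/-- The restriction of `γ` to `[0, L]` is a minimizing geodesic segment of length `L`, parametrized
by arc length and issuing from `p`. Values of `γ` outside `[0, L]` are irrelevant. -/
def IsGeodesicSegment {X : Type*} [PseudoMetricSpace X] (p : X) (γ : ℝ → X) (L : ℝ) : Prop :=
  γ 0 = p ∧ ∀ s ∈ Icc (0 : ℝ) L, ∀ t ∈ Icc (0 : ℝ) L, dist (γ s) (γ t) = |s - t|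

section

variable {X : Type*} [PseudoMetricSpace X] {p : X} {γ : ℝ → X}

theorem IsGeodesicSegment.mono {L L' : ℝ} (hγ : IsGeodesicSegment p γ L) (hL : L' ≤ L) :
    IsGeodesicSegment p γ L' :=
  ⟨hγ.1, fun s hs t ht ↦ hγ.2 s (Icc_subset_Icc_right hL hs) t (Icc_subset_Icc_right hL ht)⟩

theorem IsGeodesicSegment.dist_left {L t : ℝ} (hγ : IsGeodesicSegment p γ L)
    (ht : t ∈ Icc 0 L) : dist p (γ t) = t := by
  have h := hγ.2 0 ⟨le_rfl, ht.1.trans ht.2⟩ t ht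
  rwa [hγ.1, zero_sub, abs_neg, abs_of_nonneg ht.1] at h

theorem exists_isGeodesicSegment_of_not_isBounded
    (hgeod : ∀ z, ∃ γ, IsGeodesicSegment p γ (dist p z))
    (hunb : ¬ Bornology.IsBounded (univ : Set X)) (L : ℝ) :
    ∃ γ, IsGeodesicSegment p γ L := by
  obtain ⟨z, hz⟩ : ∃ z, L < dist p z := by
    by_contra! h
    exact hunb (Metric.isBounded_closedBall.subset fun z _ ↦ Metric.mem_closedBall'.2 (h z))
  exact (hgeod z).imp fun _ hγ ↦ hγ.mono hz.le

theorem IsGeodesicSegment.ofReal_sub_le_ediam_sphere {r R c : ℝ} {m : X}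
    (hγ : IsGeodesicSegment p γ R) (hrR : r ≤ R) (hm : dist p m = r)
    (hc : c ≤ dist (γ R) m) :
    ENNReal.ofReal (c - (R - r)) ≤ Metric.ediam (Metric.sphere p r) := by
  have hr : r ∈ Icc 0 R := ⟨hm ▸ dist_nonneg, hrR⟩
  have hR : R ∈ Icc 0 R := ⟨hr.1.trans hrR, le_rfl⟩
  have hx : γ r ∈ Metric.sphere p r := Metric.mem_sphere'.2 (hγ.dist_left hr)
  have hend : dist (γ R) (γ r) = R - r := by
    rw [hγ.2 R hR r hr, abs_of_nonneg (sub_nonneg.2 hrR)]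
  have hle : c - (R - r) ≤ dist (γ r) m := by
    linarith [dist_triangle (γ R) (γ r) m]
  calc ENNReal.ofReal (c - (R - r)) ≤ ENNReal.ofReal (dist (γ r) m) :=
        ENNReal.ofReal_le_ofReal hle
    _ = edist (γ r) m := (edist_dist _ _).symm
    _ ≤ Metric.ediam (Metric.sphere p r) :=
        Metric.edist_le_ediam_of_mem hx (Metric.mem_sphere'.2 hm)

end

theorem ofReal_le_limsup_div_ofReal {f : ℝ → ENNReal} {a : ℝ}
    (h : ∃ᶠ r in atTop, ENNReal.ofReal (a * r) ≤ f r) :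
    ENNReal.ofReal a ≤ limsup (fun r ↦ f r / ENNReal.ofReal r) atTop := by
  refine le_limsup_of_frequently_le
    ((h.and_eventually (eventually_gt_atTop 0)).mono fun r ⟨hr, hpos⟩ ↦ ?_)
  rw [ENNReal.ofReal_mul' hpos.le] at hr
  exact (ENNReal.le_div_iff_mul_le (.inl (ENNReal.ofReal_pos.2 hpos).ne')
    (.inl ENNReal.ofReal_ne_top)).2 hr

theorem linear_diameter_growth_of_uniform_cuts_general
    {X : Type*} [PseudoMetricSpace X] {p : X} {S : ℝ} (hS : 0 < S)
    (hgeod : ∀ L, ∃ γ, IsGeodesicSegment p γ L)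
    (hcut : ∃ᶠ d : ℝ in atTop, ∃ m : X, dist p m = d / 2 ∧
      ∀ x, dist p x = (1 / 2 + S) * d → 3 * S * d ≤ dist x m) :
    ENNReal.ofReal (4 * S) ≤
      limsup (fun r : ℝ ↦ Metric.ediam (Metric.sphere p r) / ENNReal.ofReal r) atTop := by
  have hhalf : Tendsto (fun d : ℝ ↦ d / 2) atTop atTop := tendsto_id.atTop_div_const two_pos
  refine ofReal_le_limsup_div_ofReal (hhalf.frequently (hcut.mono ?_))
  rintro d ⟨m, hm, hcut⟩
  have hd : 0 ≤ d := by linarith [dist_nonneg (x := p) (y := m)]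
  have hSd : 0 ≤ S * d := mul_nonneg hS.le hd
  have hrR : d / 2 ≤ (1 / 2 + S) * d := by linarith
  obtain ⟨γ, hγ⟩ := hgeod ((1 / 2 + S) * d)
  have hend : dist p (γ ((1 / 2 + S) * d)) = (1 / 2 + S) * d :=
    hγ.dist_left ⟨by positivity, le_rfl⟩
  calc ENNReal.ofReal (4 * S * (d / 2))
      = ENNReal.ofReal (3 * S * d - ((1 / 2 + S) * d - d / 2)) := by ring_nf
    _ ≤ Metric.ediam (Metric.sphere p (d / 2)) :=
        hγ.ofReal_sub_le_ediam_sphere hrR hm (hcut _ hend)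

/-- In a proper unbounded geodesic metric space, if there exist `d_k → ∞`
and halfway points `m_k` with `dist p m_k = d_k/2` such that every point of the sphere of
radius `(1/2 + S)·d_k` about `p` is at distance at least `3·S·d_k` from `m_k`, then the
spheres about `p` have linear diameter growth at rate at least `4·S`. -/
theorem linear_diameter_growth_of_uniform_cuts
    {X : Type*} [MetricSpace X] [ProperSpace X]
    (hgeod : ∀ a b : X, ∃ γ : ℝ → X, γ 0 = a ∧ γ (dist a b) = b ∧
      ∀ s ∈ Icc (0 : ℝ) (dist a b), ∀ t ∈ Icc (0 : ℝ) (dist a b),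
        dist (γ s) (γ t) = |s - t|)
    (hunb : ¬ Bornology.IsBounded (Set.univ : Set X))
    (p : X) (S : ℝ) (hS : 0 < S)
    (d : ℕ → ℝ) (hdpos : ∀ k, 0 < d k)
    (hdiv : Tendsto d atTop atTop)
    (m : ℕ → X) (hm : ∀ k, dist p (m k) = d k / 2)
    (hcut : ∀ k, ∀ x : X, dist p x = (1 / 2 + S) * d k → 3 * S * d k ≤ dist x (m k)) :
    ENNReal.ofReal (4 * S) ≤
      Filter.limsup
        (fun r : ℝ => EMetric.diam (Metric.sphere p r) / ENNReal.ofReal r) atTop :=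
  linear_diameter_growth_of_uniform_cuts_general hS
    (exists_isGeodesicSegment_of_not_isBounded
      (fun z ↦ (hgeod p z).imp fun _ hγ ↦ ⟨hγ.1, hγ.2.2⟩) hunb)
    (hdiv.frequently (.of_forall fun k ↦ ⟨m k, hm k, hcut k⟩))
end

section
/- Let (X', d') be a metric space and equip X' × ℝ with the ℓ²-product metric d((x,s),(y,t)) := √(d'(x,y)² + (s−t)²). Let γ = (σ¹, σ²) : [0,1] → X' × ℝ be a continuous loop (γ(0) = γ(1)) of finite length such that L(γ) ≤ L(σ) for every continuous loop σ : [0,1] → X' × ℝ that is homotopic to γ relative to its endpoints. Then σ² is constant; that is, γ is of the form σ¹ × {c} for some c ∈ ℝ. -/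
open Set

/-!
The length of a curve `γ = (γ₁, γ₂)` in an `ℓᵖ`-product, `1 ≤ p < ∞`, satisfies
`L(γ₁)ᵖ + L(γ₂)ᵖ ≤ L(γ)ᵖ`: on a finite set of parameters this is Minkowski's inequality for the
increments, and lengths are limits over such sets. If `γ₂` is null-homotopic, then `γ` is homotopic
to the loop obtained by freezing its second component, whose length is `L(γ₁)`. Minimality gives
`L(γ) ≤ L(γ₁)`, and as `L(γ) < ∞` this forces `L(γ₂) = 0`.
-/

open Filter Topology
open scoped ENNReal

section Variation

variable {α E : Type*} [LinearOrder α] [PseudoEMetricSpace E]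

lemma eVariationOn_insert_of_isGreatest (f : α → E) {s : Set α} {a m : α} (hm : IsGreatest s m)
    (hma : m ≤ a) : eVariationOn f (insert a s) = eVariationOn f s + edist (f m) (f a) := by
  rw [insert_eq, union_comm, eVariationOn.union' f hm isLeast_singleton hma,
    eVariationOn.subsingleton f subsingleton_singleton, add_zero]

lemma tendsto_eVariationOn_inter_finset (f : α → E) (s : Set α) :
    Tendsto (fun F : Finset α ↦ eVariationOn f (s ∩ F)) atTop (𝓝 (eVariationOn f s)) := by
  classical
  have hmono : Monotone fun F : Finset α ↦ eVariationOn f (s ∩ F) := fun F G hFG ↦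
    eVariationOn.mono f (inter_subset_inter_right s (Finset.coe_subset.2 hFG))
  suffices h : eVariationOn f s = ⨆ F : Finset α, eVariationOn f (s ∩ F) from
    h ▸ tendsto_atTop_iSup hmono
  refine le_antisymm (iSup_le ?_) (iSup_le fun F ↦ eVariationOn.mono f inter_subset_left)
  rintro ⟨n, u, hu, us⟩
  refine le_iSup_of_le ((Finset.range (n + 1)).image u) ?_
  exact eVariationOn.sum_le_of_monotoneOn_Iic (hu.monotoneOn _) fun i hi ↦
    ⟨us i, Finset.mem_coe.2 (Finset.mem_image_of_mem u (Finset.mem_range_succ_iff.2 hi))⟩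

end Variation

lemma ennreal_Lp_add_le_pair {q : ℝ} (hq : 1 ≤ q) (a b c d : ℝ≥0∞) :
    ((a + c) ^ q + (b + d) ^ q) ^ (1 / q) ≤
      (a ^ q + b ^ q) ^ (1 / q) + (c ^ q + d ^ q) ^ (1 / q) := by
  simpa using ENNReal.Lp_add_le Finset.univ ![a, b] ![c, d] hq

section ProductVariation

variable {α X Y : Type*} [LinearOrder α] [PseudoEMetricSpace X] {p : ℝ≥0∞} [Fact (1 ≤ p)]

section PseudoEMetric

variable [PseudoEMetricSpace Y]

lemma eVariationOn_fst_snd_Lp_le_of_finite (hp : p ≠ ∞) (γ : α → WithLp p (X × Y)) {s : Set α}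
    (hs : s.Finite) :
    (eVariationOn (fun t ↦ (γ t).fst) s ^ p.toReal +
      eVariationOn (fun t ↦ (γ t).snd) s ^ p.toReal) ^ (1 / p.toReal) ≤ eVariationOn γ s := by
  have hp1 : 1 ≤ p.toReal := (ENNReal.dichotomy p).resolve_left hp
  have hp0 : 0 < p.toReal := by positivity
  lift s to Finset α using hs
  induction s using Finset.induction_on_max with
  | empty => simp [hp0]
  | insert a s ha ih =>
    obtain rfl | hne := s.eq_empty_or_nonempty
    · simp [hp0]
    have hm := s.isGreatest_max' hne
    have hma := (ha _ hm.1).le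
    simp only [Finset.coe_insert, eVariationOn_insert_of_isGreatest _ hm hma]
    rw [WithLp.prod_edist_eq_add hp0]
    exact (ennreal_Lp_add_le_pair hp1 _ _ _ _).trans (by gcongr)

lemma eVariationOn_fst_snd_Lp_le (hp : p ≠ ∞) (γ : α → WithLp p (X × Y)) (s : Set α) :
    (eVariationOn (fun t ↦ (γ t).fst) s ^ p.toReal +
      eVariationOn (fun t ↦ (γ t).snd) s ^ p.toReal) ^ (1 / p.toReal) ≤ eVariationOn γ s := by
  have hfst := tendsto_eVariationOn_inter_finset (fun t ↦ (γ t).fst) s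
  have hsnd := tendsto_eVariationOn_inter_finset (fun t ↦ (γ t).snd) s
  refine le_of_tendsto_of_tendsto'
    (((hfst.ennrpow_const p.toReal).add (hsnd.ennrpow_const p.toReal)).ennrpow_const _)
    (tendsto_eVariationOn_inter_finset γ s) fun F ↦ ?_
  exact eVariationOn_fst_snd_Lp_le_of_finite hp γ (F.finite_toSet.inter_of_right s)

lemma eVariationOn_toLp_const_right (f : α → X) (y : Y) (s : Set α) :
    eVariationOn (fun t ↦ WithLp.toLp p (f t, y)) s = eVariationOn f s := by
  obtain rfl | hp1 := ENNReal.dichotomy p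
  · simp [eVariationOn, WithLp.prod_edist_eq_sup]
  · have hp0 : 0 < p.toReal := zero_lt_one.trans_le hp1
    simp [eVariationOn, WithLp.prod_edist_eq_add hp0, hp0, hp0.ne']

end PseudoEMetric

lemma snd_eq_of_eVariationOn_le_fst [EMetricSpace Y] (hp : p ≠ ∞) {γ : α → WithLp p (X × Y)}
    {s : Set α} (hfin : eVariationOn γ s ≠ ∞)
    (hle : eVariationOn γ s ≤ eVariationOn (fun t ↦ (γ t).fst) s) {a b : α} (ha : a ∈ s)
    (hb : b ∈ s) : (γ a).snd = (γ b).snd := by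
  have hp0 : 0 < p.toReal := zero_lt_one.trans_le ((ENNReal.dichotomy p).resolve_left hp)
  set L := eVariationOn γ s
  set L₂ := eVariationOn (fun t ↦ (γ t).snd) s
  have hsum : L ^ p.toReal + L₂ ^ p.toReal ≤ L ^ p.toReal := by
    have := eVariationOn_fst_snd_Lp_le hp γ s
    rw [one_div, ENNReal.rpow_inv_le_iff hp0] at this
    exact le_trans (by gcongr) this
  have hL₂ : L₂ = 0 := by
    have : L₂ ^ p.toReal = 0 := by
      simpa using ENNReal.le_sub_of_add_le_left (by finiteness) hsum
    simpa [hp0, hp0.not_gt] using this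
  exact edist_eq_zero.1 ((eVariationOn.eq_zero_iff _).1 hL₂ a ha b hb)

end ProductVariation

section FreezeSnd

variable {X Y : Type*} [TopologicalSpace X] [TopologicalSpace Y] {p : ℝ≥0∞}
  {x : WithLp p (X × Y)}

/-- The horizontal loop with the first component of `γ` and constant second component `x.snd`: the
competitor against which a length-minimizing `γ` is compared. -/
def freezeSnd (γ : Path x x) : Path x x :=
  ((γ.map (WithLp.continuous_fst p X Y)).prod (Path.refl x.snd)).map
    (WithLp.prod_continuous_toLp p X Y)

lemma homotopic_freezeSnd {γ : Path x x}
    (hγ : (γ.map (WithLp.continuous_snd p X Y)).Homotopic (Path.refl x.snd)) :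
    γ.Homotopic (freezeSnd γ) := by
  obtain ⟨H⟩ := hγ
  have hprod : ((γ.map (WithLp.continuous_fst p X Y)).prod
      (γ.map (WithLp.continuous_snd p X Y))).Homotopic
      ((γ.map (WithLp.continuous_fst p X Y)).prod (Path.refl x.snd)) :=
    ⟨Path.Homotopic.prodHomotopy (Path.Homotopy.refl _) H⟩
  exact hprod.map ⟨_, WithLp.prod_continuous_toLp p X Y⟩

end FreezeSnd

theorem minimal_loop_in_product_has_constant_real_component_general
    {X Y : Type*} [PseudoEMetricSpace X] [EMetricSpace Y] {p : ℝ≥0∞} [Fact (1 ≤ p)] (hp : p ≠ ∞)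
    {x : WithLp p (X × Y)} (γ : Path x x)
    (hnull : (γ.map (WithLp.continuous_snd p X Y)).Homotopic (Path.refl x.snd))
    (hfin : eVariationOn γ univ ≠ ∞)
    (hmin : ∀ σ : Path x x, γ.Homotopic σ → eVariationOn γ univ ≤ eVariationOn σ univ)
    (s t : unitInterval) : (γ s).snd = (γ t).snd := by
  have hle : eVariationOn γ univ ≤ eVariationOn (fun r ↦ (γ r).fst) univ :=
    calc eVariationOn γ univ
      _ ≤ eVariationOn (freezeSnd γ) univ := hmin _ (homotopic_freezeSnd hnull)
      _ = eVariationOn (fun r ↦ (γ r).fst) univ :=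
        eVariationOn_toLp_const_right (fun r ↦ (γ r).fst) x.snd univ
  exact snd_eq_of_eVariationOn_le_fst hp hfin hle (mem_univ s) (mem_univ t)

/-- In the `ℓ²`-product `X' × ℝ` of a metric space `X'` with `ℝ`, a
continuous loop of finite length which minimizes length among all loops homotopic to it
relative to its endpoints has constant `ℝ`-component. -/
theorem minimal_loop_in_product_has_constant_real_component
    {X' : Type*} [MetricSpace X']
    (x : WithLp 2 (X' × ℝ)) (γ : Path x x)
    (hfin : eVariationOn (⇑γ) (Set.univ : Set unitInterval) ≠ ⊤)
    (hmin : ∀ σ : Path x x, γ.Homotopic σ →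
      eVariationOn (⇑γ) (Set.univ : Set unitInterval) ≤
        eVariationOn (⇑σ) (Set.univ : Set unitInterval)) :
    ∀ s t : unitInterval,
      (WithLp.equiv 2 (X' × ℝ) (γ s)).2 = (WithLp.equiv 2 (X' × ℝ) (γ t)).2 :=
  minimal_loop_in_product_has_constant_real_component_general ENNReal.ofNat_ne_top γ
    (SimplyConnectedSpace.paths_homotopic _ _) hfin hmin
end
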